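/- Let N ≥ 3, let -N < β < 0, and let p, q > 1 satisfy N/(p+1) + (N - |β|)/(q+1) > N - 2 and p > N/((N-1)q - 1). Set r = (q+1)/q. Then there exists α₀ > 0 such that for every α ≥ α₀, S^rad_{α,β} > S_{α,β}; in particular, for α ≥ α₀ no radially symmetric member of 𝒟 attains the infimum S_{α,β}, so the ground state is not radially symmetric. -/

import Mathlib

open MeasureTheory Metric Set Filter

noncomputable section

abbrev E (N : ℕ) := EuclideanSpace ℝ (Fin N)

/-- The Laplacian: sum of pure second partial derivatives. -/
def lap {N : ℕ} (u : E N → ℝ) (x : E N) : ℝ :=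
  ∑ i, fderiv ℝ (fun y => fderiv ℝ u y (EuclideanSpace.single i 1)) x (EuclideanSpace.single i 1)
/-- The admissible class 𝒟: C² functions on the closed unit ball, vanishing on the
boundary sphere, not identically zero. -/
def memD {N : ℕ} (u : E N → ℝ) : Prop :=
  ContDiffOn ℝ 2 u (closedBall 0 1) ∧
  (∀ x : E N, ‖x‖ = 1 → u x = 0) ∧
  ∃ x ∈ closedBall (0 : E N) 1, u x ≠ 0

/-- A function is radial if its value depends only on the norm. -/
def radial {N : ℕ} (u : E N → ℝ) : Prop := ∀ x y : E N, ‖x‖ = ‖y‖ → u x = u y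

/-- The weighted second-order Rayleigh quotient
R(u) = (∫_B |x|^{-β(r-1)} |Δu|^r) / (∫_B |x|^α |u|^{p+1})^{r/(p+1)}. -/
def ray2 {N : ℕ} (α β p r : ℝ) (u : E N → ℝ) : ℝ :=
  (∫ x in ball (0 : E N) 1, ‖x‖ ^ (-β * (r - 1)) * |lap u x| ^ r) /
    (∫ x in ball (0 : E N) 1, ‖x‖ ^ α * |u x| ^ (p + 1)) ^ (r / (p + 1))

/-- The ground-state level S_{α,β}. -/
def S2 (N : ℕ) (α β p r : ℝ) : ℝ :=
  sInf {c | ∃ u : E N → ℝ, memD u ∧ ray2 α β p r u = c}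

/-- The radial ground-state level S^rad_{α,β}. -/
def S2rad (N : ℕ) (α β p r : ℝ) : ℝ :=
  sInf {c | ∃ u : E N → ℝ, memD u ∧ radial u ∧ ray2 α β p r u = c}

/-!
As `α → ∞` the weight `|x|^α` only sees the boundary layer of width `1 / α`. A fixed bump function
rescaled to a ball of radius `1 / α` touching the sphere from inside has numerator `O(α^(2r - N))`
and weighted mass of order at least `α^(-N)`, so `S ≤ C α^(2r - N + N r / (p + 1))`.

A radial function cannot concentrate at a point. Integrating `(s^(N-1) u')' = s^(N-1) Δu` and using
that `u` vanishes on the sphere bounds `|x|^(N-1) |u(x)|` by a multiple of `(1 - |x|) ∫ |Δu|`, and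
by Hölder's inequality with the weight `|x|^(-β(r-1))`, whose dual weight is `|x|^β`, the last
integral is at most a constant times the numerator to the power `1 / r`. As
`∫₀¹ s^α (1 - s)^(p+1) ds = O(α^(-(p+2)))`, this gives `S^rad ≥ c α^((p + 2) r / (p + 1))`.

The difference between the second exponent and the first is
`(p ((N - 1) q - 1) - N) / (q (p + 1))`, which is positive as `p > N / ((N - 1) q - 1)`.
-/

section RealEstimates

lemma rpow_le_exp_neg_mul_one_sub {s a : ℝ} (hs : 0 < s) (ha : 0 ≤ a) :
    s ^ a ≤ Real.exp (-(a * (1 - s))) := by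
  rw [Real.rpow_def_of_pos hs, Real.exp_le_exp]
  nlinarith [Real.log_le_sub_one_of_pos hs]

lemma exp_neg_two_mul_le_rpow {s a : ℝ} (hs : 1 / 2 ≤ s) (hs1 : s ≤ 1) (ha : 0 ≤ a) :
    Real.exp (-(2 * (a * (1 - s)))) ≤ s ^ a := by
  have hs0 : 0 < s := by linarith
  have hlog : -(2 * (1 - s)) ≤ Real.log s := calc
    -(2 * (1 - s)) ≤ -(s⁻¹ * (1 - s)) := by
      have : s⁻¹ ≤ 2 := inv_le_of_inv_le₀ two_pos (by linarith)
      gcongr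
    _ = 1 - s⁻¹ := by field_simp; ring
    _ ≤ Real.log s := Real.one_sub_inv_le_log_of_pos hs0
  rw [Real.rpow_def_of_pos hs0, Real.exp_le_exp]
  nlinarith

lemma rpow_le_two_rpow_abs {s : ℝ} (hs : 1 / 2 ≤ s) (hs1 : s ≤ 1) (γ : ℝ) :
    s ^ γ ≤ 2 ^ |γ| := by
  have hs0 : 0 < s := by linarith
  calc s ^ γ = (s⁻¹) ^ (-γ) := by rw [Real.rpow_neg (by positivity), Real.inv_rpow hs0.le, inv_inv]
    _ ≤ (s⁻¹) ^ |γ| :=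
        Real.rpow_le_rpow_of_exponent_le ((one_le_inv₀ hs0).2 hs1) (neg_le_abs γ)
    _ ≤ 2 ^ |γ| := by
        gcongr
        exact inv_le_of_inv_le₀ two_pos (by linarith)

lemma integral_rpow_mul_one_sub_rpow_le {a t : ℝ} (ha : 0 < a) (ht : 0 ≤ t) :
    ∫ s in Ioo (0 : ℝ) 1, s ^ a * (1 - s) ^ t ≤ Real.Gamma (t + 1) / a ^ (t + 1) := by
  have hΓ : ∫ s in Ioi (0 : ℝ), s ^ (t + 1 - 1) * Real.exp (-(a * s)) =
      Real.Gamma (t + 1) / a ^ (t + 1) := by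
    rw [Real.integral_rpow_mul_exp_neg_mul_Ioi (by linarith) ha, one_div, Real.inv_rpow ha.le]
    field
  have hint : IntegrableOn (fun s : ℝ => s ^ (t + 1 - 1) * Real.exp (-(a * s))) (Ioi 0) := by
    refine Integrable.of_integral_ne_zero ?_
    rw [hΓ]
    have := Real.Gamma_pos_of_pos (show 0 < t + 1 by linarith)
    positivity
  calc ∫ s in Ioo (0 : ℝ) 1, s ^ a * (1 - s) ^ t
      = ∫ s in Ioo (0 : ℝ) 1, (1 - s) ^ a * s ^ t := by
        simpa [intervalIntegral.integral_of_le, integral_Ioc_eq_integral_Ioo] using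
          (intervalIntegral.integral_comp_sub_left (a := 0) (b := 1)
            (fun s : ℝ => s ^ a * (1 - s) ^ t) 1).symm
    _ ≤ ∫ s in Ioo (0 : ℝ) 1, s ^ (t + 1 - 1) * Real.exp (-(a * s)) := by
        refine integral_mono_of_nonneg ?_ (hint.mono_set Ioo_subset_Ioi_self) ?_ <;>
          filter_upwards [ae_restrict_mem measurableSet_Ioo] with s hs
        · have := hs.1; have := sub_pos.2 hs.2
          simp only [Pi.zero_apply]; positivity
        · have := rpow_le_exp_neg_mul_one_sub (sub_pos.2 hs.2) ha.le
          rw [sub_sub_cancel] at this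
          rw [add_sub_cancel_right, mul_comm]
          exact mul_le_mul_of_nonneg_left this (Real.rpow_nonneg hs.1.le _)
    _ ≤ ∫ s in Ioi (0 : ℝ), s ^ (t + 1 - 1) * Real.exp (-(a * s)) := by
        refine setIntegral_mono_set hint ?_ Ioo_subset_Ioi_self.eventuallyLE
        filter_upwards [ae_restrict_mem measurableSet_Ioi] with s hs
        exact mul_nonneg (Real.rpow_nonneg (le_of_lt hs) _) (Real.exp_pos _).le
    _ = Real.Gamma (t + 1) / a ^ (t + 1) := hΓ

lemma eventually_mul_rpow_lt_mul_rpow {a b c : ℝ} (hab : a < b) (hc : 0 < c) (C : ℝ) :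
    ∀ᶠ α : ℝ in atTop, C * α ^ a < c * α ^ b := by
  filter_upwards [(tendsto_rpow_atTop (sub_pos.2 hab)).eventually_gt_atTop (C / c),
    eventually_gt_atTop 0] with α hα hα0
  have hsplit : α ^ b = α ^ (b - a) * α ^ a := by rw [← Real.rpow_add hα0, sub_add_cancel]
  rw [hsplit, ← mul_assoc, mul_comm c]
  exact mul_lt_mul_of_pos_right ((div_lt_iff₀ hc).1 hα) (Real.rpow_pos_of_pos hα0 _)

end RealEstimates

section WeightedHolder

variable {X : Type*} [MeasurableSpace X] {μ : Measure X}

lemma memLp_of_integrable_rpow {r : ℝ} (hr : 0 < r) {g : X → ℝ} (hg : AEStronglyMeasurable g μ)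
    (hg0 : 0 ≤ᵐ[μ] g) (hgr : Integrable (fun x => g x ^ r) μ) : MemLp g (ENNReal.ofReal r) μ := by
  rw [← integrable_norm_rpow_iff hg (by simpa using hr) ENNReal.ofReal_ne_top,
    ENNReal.toReal_ofReal hr.le]
  refine hgr.congr ?_
  filter_upwards [hg0] with x hx
  rw [Real.norm_of_nonneg hx]

lemma integral_le_weighted_Lp_mul {r s : ℝ} (hrs : r.HolderConjugate s) {w f : X → ℝ}
    (hw : ∀ᵐ x ∂μ, 0 < w x) (hf : 0 ≤ᵐ[μ] f)
    (hwm : AEStronglyMeasurable w μ) (hfm : AEStronglyMeasurable f μ)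
    (hwf : Integrable (fun x => w x * f x ^ r) μ) (hws : Integrable (fun x => w x ^ (-(s / r))) μ) :
    ∫ x, f x ∂μ ≤
      (∫ x, w x * f x ^ r ∂μ) ^ (1 / r) * (∫ x, w x ^ (-(s / r)) ∂μ) ^ (1 / s) := by
  have hr := hrs.pos
  have hs := hrs.symm.pos
  have hfr : ∀ᵐ x ∂μ, (w x ^ (1 / r) * f x) ^ r = w x * f x ^ r := by
    filter_upwards [hw, hf] with x hx hfx
    rw [Real.mul_rpow (by positivity) hfx, ← Real.rpow_mul hx.le, one_div_mul_cancel hr.ne',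
      Real.rpow_one]
  have hgs : ∀ᵐ x ∂μ, (w x ^ (-(1 / r))) ^ s = w x ^ (-(s / r)) := by
    filter_upwards [hw] with x hx
    rw [← Real.rpow_mul hx.le]
    ring_nf
  have hf0 : 0 ≤ᵐ[μ] fun x => w x ^ (1 / r) * f x := by
    filter_upwards [hw, hf] with x hx hfx using mul_nonneg (by positivity) hfx
  have hg0 : 0 ≤ᵐ[μ] fun x => w x ^ (-(1 / r)) := by
    filter_upwards [hw] with x hx using Real.rpow_nonneg hx.le _
  have hfLr : MemLp (fun x => w x ^ (1 / r) * f x) (ENNReal.ofReal r) μ :=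
    memLp_of_integrable_rpow hr ((hwm.aemeasurable.pow_const _).aestronglyMeasurable.mul hfm) hf0
      (hwf.congr (hfr.mono fun _ hx => hx.symm))
  have hgLs : MemLp (fun x => w x ^ (-(1 / r))) (ENNReal.ofReal s) μ :=
    memLp_of_integrable_rpow hs (hwm.aemeasurable.pow_const _).aestronglyMeasurable hg0
      (hws.congr (hgs.mono fun _ hx => hx.symm))
  calc ∫ x, f x ∂μ = ∫ x, w x ^ (1 / r) * f x * w x ^ (-(1 / r)) ∂μ := by
        refine integral_congr_ae ?_
        filter_upwards [hw] with x hx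
        rw [mul_right_comm, ← Real.rpow_add hx, add_neg_cancel, Real.rpow_zero, one_mul]
    _ ≤ _ := integral_mul_le_Lp_mul_Lq_of_nonneg hrs hf0 hg0 hfLr hgLs
    _ = _ := by rw [integral_congr_ae hfr, integral_congr_ae hgs]

end WeightedHolder

section PolarCoordinates

/-- The surface area of the unit sphere of `E N`, as the dimension times the volume of the
unit ball. -/
def sphereArea (N : ℕ) : ℝ := N * volume.real (ball (0 : E N) 1)

variable {N : ℕ}

lemma sphereArea_pos [NeZero N] : 0 < sphereArea N :=
  mul_pos (Nat.cast_pos.2 (NeZero.pos N))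
    (ENNReal.toReal_pos (measure_ball_pos _ _ one_pos).ne' measure_ball_lt_top.ne)

lemma setIntegral_ball_fun_norm [NeZero N] (f : ℝ → ℝ) (R : ℝ) :
    ∫ x in ball (0 : E N) R, f ‖x‖ =
      sphereArea N * ∫ s in Ioo (0 : ℝ) R, s ^ (N - 1) * f s := by
  have hball : (ball (0 : E N) R).indicator (fun x => f ‖x‖) =
      fun x => (Iio R).indicator f ‖x‖ := by
    ext x
    simp [indicator]
  have hIio : (fun s : ℝ => s ^ (N - 1) • (Iio R).indicator f s) =
      (Iio R).indicator fun s => s ^ (N - 1) * f s := by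
    ext s
    simp [indicator]
  rw [← integral_indicator measurableSet_ball, hball, integral_fun_norm_addHaar,
    finrank_euclideanSpace_fin, hIio, setIntegral_indicator measurableSet_Iio, Ioi_inter_Iio,
    nsmul_eq_mul, smul_eq_mul, ← mul_assoc, sphereArea]

lemma integrableOn_ball_fun_norm_iff [NeZero N] {f : ℝ → ℝ} {R : ℝ} :
    IntegrableOn (fun x : E N => f ‖x‖) (ball 0 R) ↔
      IntegrableOn (fun s => s ^ (N - 1) * f s) (Ioo 0 R) := by
  simpa using integrableOn_fun_norm_addHaar (volume : Measure (E N)) (f := f) (r := R)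

lemma pow_pred_mul_rpow [NeZero N] {s : ℝ} (hs : 0 < s) (γ : ℝ) :
    s ^ (N - 1) * s ^ γ = s ^ ((N : ℝ) - 1 + γ) := by
  rw [← Real.rpow_natCast, Nat.cast_pred (NeZero.pos N), ← Real.rpow_add hs]

lemma integrableOn_norm_rpow_ball [NeZero N] {γ : ℝ} (hγ : -(N : ℝ) < γ) (R : ℝ) :
    IntegrableOn (fun x : E N => ‖x‖ ^ γ) (ball 0 R) := by
  rcases le_or_gt R 0 with hR | hR
  · simp [ball_eq_empty.2 hR]
  rw [integrableOn_ball_fun_norm_iff (f := fun s => s ^ γ),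
    integrableOn_congr_fun (fun s hs => pow_pred_mul_rpow hs.1 γ) measurableSet_Ioo,
    intervalIntegral.integrableOn_Ioo_rpow_iff hR]
  linarith

lemma integrableOn_norm_rpow_mul_one_sub_norm_rpow [NeZero N] {γ t : ℝ} (hγ : -(N : ℝ) < γ)
    (ht : 0 ≤ t) : IntegrableOn (fun x : E N => ‖x‖ ^ γ * (1 - ‖x‖) ^ t) (ball 0 1) := by
  have hweight : IntegrableOn (fun x : E N => ‖x‖ ^ γ) (closedBall 0 1) :=
    (integrableOn_norm_rpow_ball hγ 2).mono_set (closedBall_subset_ball one_lt_two)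
  have hcont : Continuous fun x : E N => (1 - ‖x‖) ^ t :=
    (by fun_prop : Continuous fun x : E N => 1 - ‖x‖).rpow_const fun _ => Or.inr ht
  exact (hweight.mul_continuousOn hcont.continuousOn (isCompact_closedBall 0 1)).mono_set
    ball_subset_closedBall

lemma integral_norm_rpow_unitBall [NeZero N] {γ : ℝ} (hγ : -(N : ℝ) < γ) :
    ∫ x in ball (0 : E N) 1, ‖x‖ ^ γ = sphereArea N / (N + γ) := by
  have hne : (N : ℝ) + γ ≠ 0 := by linarith
  rw [setIntegral_ball_fun_norm (fun s => s ^ γ),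
    setIntegral_congr_fun measurableSet_Ioo (fun s hs => pow_pred_mul_rpow hs.1 γ),
    ← integral_Ioc_eq_integral_Ioo, ← intervalIntegral.integral_of_le zero_le_one,
    integral_rpow (Or.inl (by linarith)), sub_add_eq_add_sub, sub_add_cancel, Real.one_rpow,
    Real.zero_rpow hne, sub_zero, mul_one_div]

end PolarCoordinates

section Laplacian

variable {N : ℕ}

lemma lap_congr {u v : E N → ℝ} {x : E N} (h : u =ᶠ[nhds x] v) : lap u x = lap v x := by
  refine Finset.sum_congr rfl fun i _ => ?_
  have hfderiv : (fun y => fderiv ℝ u y (EuclideanSpace.single i 1)) =ᶠ[nhds x]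
      fun y => fderiv ℝ v y (EuclideanSpace.single i 1) := by
    filter_upwards [h.eventuallyEq_nhds] with y hy
    rw [hy.fderiv_eq]
  rw [hfderiv.fderiv_eq]

lemma support_lap_subset (u : E N → ℝ) : Function.support (lap u) ⊆ tsupport u := by
  intro x hx
  contrapose! hx
  have hzero : lap u x = lap 0 x := lap_congr (notMem_tsupport_iff_eventuallyEq.1 hx)
  simpa [lap] using hzero

lemma exists_continuousOn_eqOn_lap {s : Set (E N)} (hs : UniqueDiffOn ℝ s) {u : E N → ℝ}
    (hu : ContDiffOn ℝ 2 u s) : ∃ G : E N → ℝ, ContinuousOn G s ∧ EqOn (lap u) G (interior s) := by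
  have hnhds : ∀ y ∈ interior s, s ∈ nhds y := fun y hy => mem_interior_iff_mem_nhds.1 hy
  refine ⟨fun x => ∑ i, fderivWithin ℝ (fun y => fderivWithin ℝ u s y
    (EuclideanSpace.single i 1)) s x (EuclideanSpace.single i 1), ?_, fun x hx => ?_⟩
  · refine continuousOn_finsetSum _ fun i _ => ?_
    have hpartial : ContDiffOn ℝ 1 (fun y => fderivWithin ℝ u s y (EuclideanSpace.single i 1)) s :=
      (hu.fderivWithin hs (by norm_num)).clm_apply contDiffOn_const
    exact (hpartial.continuousOn_fderivWithin hs le_rfl).clm_apply continuousOn_const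
  · refine Finset.sum_congr rfl fun i _ => ?_
    have hpartial : (fun y => fderiv ℝ u y (EuclideanSpace.single i 1)) =ᶠ[nhds x]
        fun y => fderivWithin ℝ u s y (EuclideanSpace.single i 1) := by
      filter_upwards [isOpen_interior.mem_nhds hx] with y hy
      rw [fderivWithin_of_mem_nhds (hnhds y hy)]
    rw [fderivWithin_of_mem_nhds (hnhds x hx), hpartial.fderiv_eq]

lemma continuousOn_lap {s : Set (E N)} (hs : IsOpen s) {u : E N → ℝ} (hu : ContDiffOn ℝ 2 u s) :
    ContinuousOn (lap u) s := by
  obtain ⟨G, hG, hGu⟩ := exists_continuousOn_eqOn_lap hs.uniqueDiffOn hu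
  exact hG.congr (hs.interior_eq ▸ hGu)

lemma integrableOn_norm_rpow_mul_abs_lap_rpow [NeZero N] {u : E N → ℝ}
    (hu : ContDiffOn ℝ 2 u (closedBall 0 1)) {γ r : ℝ} (hγ : -(N : ℝ) < γ) (hr : 0 ≤ r) :
    IntegrableOn (fun x : E N => ‖x‖ ^ γ * |lap u x| ^ r) (ball 0 1) := by
  have huniq : UniqueDiffOn ℝ (closedBall (0 : E N) 1) :=
    uniqueDiffOn_convex (convex_closedBall _ _) (by simp [interior_closedBall])
  obtain ⟨G, hG, hGu⟩ := exists_continuousOn_eqOn_lap huniq hu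
  have hGint : IntegrableOn (fun x : E N => ‖x‖ ^ γ * |G x| ^ r) (closedBall 0 1) :=
    ((integrableOn_norm_rpow_ball hγ 2).mono_set
      (closedBall_subset_ball one_lt_two)).mul_continuousOn
      (hG.abs.rpow_const fun _ _ => Or.inr hr) (isCompact_closedBall 0 1)
  refine (hGint.mono_set ball_subset_closedBall).congr_fun (fun x hx => ?_) measurableSet_ball
  rw [hGu (ball_subset_interior_closedBall hx)]

lemma fderiv_comp_smul_sub {g : E N → ℝ} (hg : Differentiable ℝ g) (α : ℝ) (a x v : E N) :
    fderiv ℝ (fun y => g (α • (y - a))) x v = α * fderiv ℝ g (α • (x - a)) v := by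
  have hinner : HasFDerivAt (fun y : E N => α • (y - a)) (α • ContinuousLinearMap.id ℝ (E N)) x :=
    ((hasFDerivAt_id x).sub_const a).const_smul α
  have hcomp : HasFDerivAt (fun y => g (α • (y - a))) _ x :=
    (hg (α • (x - a))).hasFDerivAt.comp x hinner
  simp [hcomp.fderiv]

lemma lap_comp_smul_sub {g : E N → ℝ} (hg : ContDiff ℝ 2 g) (α : ℝ) (a x : E N) :
    lap (fun y => g (α • (y - a))) x = α ^ 2 * lap g (α • (x - a)) := by
  unfold lap
  rw [Finset.mul_sum]
  refine Finset.sum_congr rfl fun i _ => ?_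
  have hpartial : ContDiff ℝ 1 (fun z => fderiv ℝ g z (EuclideanSpace.single i 1)) :=
    (hg.fderiv_right (by norm_num)).clm_apply contDiff_const
  have hd := hpartial.differentiable one_ne_zero
  simp_rw [fderiv_comp_smul_sub (hg.differentiable two_ne_zero)]
  have hcomp : DifferentiableAt ℝ
      (fun y => fderiv ℝ g (α • (y - a)) (EuclideanSpace.single i 1)) x :=
    (hd _).comp x ((differentiableAt_id.sub_const a).const_smul α)
  rw [fderiv_const_mul hcomp, smul_apply, fderiv_comp_smul_sub hd, smul_eq_mul, ← mul_assoc, sq]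

end Laplacian

section RadialLaplacian

variable {N : ℕ}

lemma hasFDerivAt_norm_of_ne_zero {F : Type*} [NormedAddCommGroup F] [InnerProductSpace ℝ F]
    {x : F} (hx : x ≠ 0) : HasFDerivAt (fun y : F => ‖y‖) (‖x‖⁻¹ • innerSL ℝ x) x := by
  have hsqrt := (hasStrictFDerivAt_norm_sq x).hasFDerivAt.sqrt (by positivity)
  simp only [Real.sqrt_sq (norm_nonneg _)] at hsqrt
  refine hsqrt.congr_fderiv ?_
  ext y
  simp
  field

lemma fderiv_comp_norm_single {w w' : ℝ → ℝ} {x : E N} (hx : x ≠ 0)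
    (hw : HasDerivAt w (w' ‖x‖) ‖x‖) (i : Fin N) :
    fderiv ℝ (fun y : E N => w ‖y‖) x (EuclideanSpace.single i 1) = w' ‖x‖ / ‖x‖ * x i := by
  have hcomp : HasFDerivAt (fun y : E N => w ‖y‖) _ x :=
    hw.comp_hasFDerivAt x (hasFDerivAt_norm_of_ne_zero hx)
  rw [hcomp.fderiv]
  simp [EuclideanSpace.inner_single_right]
  ring

lemma lap_comp_norm {w w' : ℝ → ℝ} {w'' : ℝ} {x : E N} (hx : x ≠ 0)
    (hw : ∀ᶠ t in nhds ‖x‖, HasDerivAt w (w' t) t) (hw' : HasDerivAt w' w'' ‖x‖) :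
    lap (fun y => w ‖y‖) x = w'' + (N - 1) * w' ‖x‖ / ‖x‖ := by
  have hxn : ‖x‖ ≠ 0 := norm_ne_zero_iff.2 hx
  have hsecond : ∀ i, fderiv ℝ (fun y => fderiv ℝ (fun z : E N => w ‖z‖) y
      (EuclideanSpace.single i 1)) x (EuclideanSpace.single i 1) =
      (w'' * ‖x‖ - w' ‖x‖) / ‖x‖ ^ 3 * x i ^ 2 + w' ‖x‖ / ‖x‖ := by
    intro i
    have hfirst : (fun y => fderiv ℝ (fun z : E N => w ‖z‖) y (EuclideanSpace.single i 1))
        =ᶠ[nhds x] fun y => w' ‖y‖ / ‖y‖ * y i := by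
      filter_upwards [continuous_norm.continuousAt.eventually hw, isOpen_ne.mem_nhds hx]
        with y hy hy0 using fderiv_comp_norm_single hy0 hy i
    have hquot := (hw'.div (hasDerivAt_id _) hxn).comp_hasFDerivAt x
      (hasFDerivAt_norm_of_ne_zero hx)
    have hprod : HasFDerivAt (fun y : E N => w' ‖y‖ / ‖y‖ * y i) _ x :=
      hquot.mul (EuclideanSpace.proj i : E N →L[ℝ] ℝ).hasFDerivAt
    rw [hfirst.fderiv_eq, hprod.fderiv]
    simp [EuclideanSpace.inner_single_right]
    field
  unfold lap
  rw [Finset.sum_congr rfl fun i _ => hsecond i, Finset.sum_add_distrib, ← Finset.mul_sum,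
    ← EuclideanSpace.real_norm_sq_eq]
  simp only [Finset.sum_const, Finset.card_univ, Fintype.card_fin, nsmul_eq_mul]
  field

end RadialLaplacian

section RadialFunctions

/-- The restriction of `u` to the line `ℝ e`. For a unit vector `e` it is the one-variable profile
of a radial function, extended evenly to negative arguments. -/
def profile {N : ℕ} (u : E N → ℝ) (e : E N) (t : ℝ) : ℝ := u (t • e)

variable {N : ℕ} {u : E N → ℝ} {e : E N}

lemma norm_smul_unit_of_nonneg (he : ‖e‖ = 1) {t : ℝ} (ht : 0 ≤ t) : ‖t • e‖ = t := by
  rw [norm_smul, he, mul_one, Real.norm_of_nonneg ht]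

lemma profile_norm (hrad : radial u) (he : ‖e‖ = 1) (x : E N) : profile u e ‖x‖ = u x :=
  hrad _ _ (norm_smul_unit_of_nonneg he (norm_nonneg x))

lemma contDiffOn_profile {n : WithTop ℕ∞} (hu : ContDiffOn ℝ n u (ball 0 1)) (he : ‖e‖ = 1) :
    ContDiffOn ℝ n (profile u e) (Ioo (-1) 1) := by
  refine hu.comp (contDiff_id.smul contDiff_const).contDiffOn fun t ht => ?_
  simpa [norm_smul, he] using abs_lt.2 ht

lemma deriv_profile_zero (hrad : radial u) : deriv (profile u e) 0 = 0 := by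
  have heven : (fun t => profile u e (-t)) = profile u e := by
    ext t
    exact hrad _ _ (by simp)
  have hodd := deriv_comp_neg (profile u e) 0
  rw [heven, neg_zero] at hodd
  linarith

lemma hasDerivAt_profile (hu : ContDiffOn ℝ 2 u (ball 0 1)) (he : ‖e‖ = 1) {t : ℝ}
    (ht : t ∈ Ioo (-1 : ℝ) 1) : HasDerivAt (profile u e) (deriv (profile u e) t) t :=
  (((contDiffOn_profile hu he).contDiffAt (isOpen_Ioo.mem_nhds ht)).differentiableAt
    two_ne_zero).hasDerivAt

lemma contDiffOn_deriv_profile (hu : ContDiffOn ℝ 2 u (ball 0 1)) (he : ‖e‖ = 1) :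
    ContDiffOn ℝ 1 (deriv (profile u e)) (Ioo (-1) 1) :=
  (contDiffOn_profile hu he).deriv_of_isOpen isOpen_Ioo (by norm_num)

lemma hasDerivAt_deriv_profile (hu : ContDiffOn ℝ 2 u (ball 0 1)) (he : ‖e‖ = 1) {t : ℝ}
    (ht : t ∈ Ioo (-1 : ℝ) 1) :
    HasDerivAt (deriv (profile u e)) (deriv (deriv (profile u e)) t) t :=
  (((contDiffOn_deriv_profile hu he).contDiffAt (isOpen_Ioo.mem_nhds ht)).differentiableAt
    one_ne_zero).hasDerivAt

lemma lap_eq_of_radial (hu : ContDiffOn ℝ 2 u (ball 0 1)) (hrad : radial u) (he : ‖e‖ = 1)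
    {x : E N} (hx : x ∈ ball 0 1) (hx0 : x ≠ 0) :
    lap u x = deriv (deriv (profile u e)) ‖x‖ + (N - 1) * deriv (profile u e) ‖x‖ / ‖x‖ := by
  have hmem : ‖x‖ ∈ Ioo (-1 : ℝ) 1 :=
    ⟨by linarith [norm_nonneg x], mem_ball_zero_iff.1 hx⟩
  have hu_eq : lap u x = lap (fun y => profile u e ‖y‖) x := by
    simp_rw [profile_norm hrad he]
  rw [hu_eq]
  refine lap_comp_norm hx0 ?_ (hasDerivAt_deriv_profile hu he hmem)
  filter_upwards [isOpen_Ioo.mem_nhds hmem] with t ht using hasDerivAt_profile hu he ht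

lemma lap_norm_smul_of_radial (hu : ContDiffOn ℝ 2 u (ball 0 1)) (hrad : radial u) (he : ‖e‖ = 1)
    {x : E N} (hx : x ∈ ball 0 1) : lap u (‖x‖ • e) = lap u x := by
  have hnorm : ‖‖x‖ • e‖ = ‖x‖ := norm_smul_unit_of_nonneg he (norm_nonneg x)
  rcases eq_or_ne x 0 with rfl | hx0
  · simp
  · rw [lap_eq_of_radial hu hrad he hx hx0, lap_eq_of_radial hu hrad he _ _, hnorm]
    · simpa [hnorm] using hx
    · rwa [← norm_ne_zero_iff, hnorm, norm_ne_zero_iff]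

lemma hasDerivAt_pow_mul_deriv_profile [NeZero N] (hu : ContDiffOn ℝ 2 u (ball 0 1))
    (hrad : radial u) (he : ‖e‖ = 1) {t : ℝ} (ht : t ∈ Ioo (0 : ℝ) 1) :
    HasDerivAt (fun s => s ^ (N - 1) * deriv (profile u e) s) (t ^ (N - 1) * lap u (t • e)) t := by
  have hnorm := norm_smul_unit_of_nonneg he ht.1.le
  have ht0 := ht.1.ne'
  have hlap := lap_eq_of_radial hu hrad he (x := t • e) (by simpa [hnorm] using ht.2)
    (by rw [← norm_ne_zero_iff, hnorm]; exact ht0)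
  rw [hnorm] at hlap
  have hmem : t ∈ Ioo (-1 : ℝ) 1 := ⟨by linarith [ht.1], ht.2⟩
  refine ((hasDerivAt_pow (N - 1) t).mul (hasDerivAt_deriv_profile hu he hmem)).congr_deriv ?_
  rw [hlap]
  obtain ⟨_ | M, rfl⟩ : ∃ M, N = M + 1 := ⟨N - 1, (Nat.succ_pred_eq_of_ne_zero NeZero.out).symm⟩
  · simp
  · simp only [Nat.add_sub_cancel]
    push_cast
    field

lemma setIntegral_ball_abs_lap_of_radial [NeZero N] (hu : ContDiffOn ℝ 2 u (ball 0 1))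
    (hrad : radial u) (he : ‖e‖ = 1) :
    ∫ x in ball (0 : E N) 1, |lap u x| =
      sphereArea N * ∫ s in Ioo (0 : ℝ) 1, s ^ (N - 1) * |lap u (s • e)| := by
  rw [← setIntegral_ball_fun_norm fun s => |lap u (s • e)|]
  refine setIntegral_congr_fun measurableSet_ball fun x hx => ?_
  simp only [lap_norm_smul_of_radial hu hrad he hx]

lemma integrableOn_pow_mul_abs_lap [NeZero N] (hu : ContDiffOn ℝ 2 u (closedBall 0 1))
    (hrad : radial u) (he : ‖e‖ = 1) :
    IntegrableOn (fun s : ℝ => s ^ (N - 1) * |lap u (s • e)|) (Ioo 0 1) := by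
  rw [← integrableOn_ball_fun_norm_iff (f := fun s => |lap u (s • e)|)]
  have hint := integrableOn_norm_rpow_mul_abs_lap_rpow hu (γ := 0) (r := 1)
    (neg_lt_zero.2 (Nat.cast_pos.2 (NeZero.pos N))) zero_le_one
  refine hint.congr_fun (fun x hx => ?_) measurableSet_ball
  simp [lap_norm_smul_of_radial (hu.mono ball_subset_closedBall) hrad he hx]

lemma pow_mul_deriv_profile_eq_integral [NeZero N] (hu : ContDiffOn ℝ 2 u (ball 0 1))
    (hrad : radial u) (he : ‖e‖ = 1) {t : ℝ} (ht : t ∈ Ioo (0 : ℝ) 1) :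
    t ^ (N - 1) * deriv (profile u e) t = ∫ s in 0..t, s ^ (N - 1) * lap u (s • e) := by
  have hsub : Icc 0 t ⊆ Ioo (-1 : ℝ) 1 := Icc_subset_Ioo (by norm_num) ht.2
  have hderiv : ContinuousOn (deriv (profile u e)) (Icc 0 t) :=
    (contDiffOn_deriv_profile hu he).continuousOn.mono hsub
  have hlap : ContinuousOn (fun s : ℝ => lap u (s • e)) (Icc 0 t) := by
    refine (continuousOn_lap isOpen_ball hu).comp (by fun_prop) fun s hs => ?_
    simpa [norm_smul_unit_of_nonneg he hs.1] using hs.2.trans_lt ht.2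
  rw [intervalIntegral.integral_eq_sub_of_hasDerivAt_of_le ht.1.le
    ((continuousOn_pow _).mul hderiv)
    (fun s hs => hasDerivAt_pow_mul_deriv_profile hu hrad he ⟨hs.1, hs.2.trans ht.2⟩)
    (((continuousOn_pow _).mul hlap).intervalIntegrable_of_Icc ht.1.le)]
  simp [deriv_profile_zero hrad]

lemma pow_mul_abs_deriv_profile_le [NeZero N] (hu : ContDiffOn ℝ 2 u (closedBall 0 1))
    (hrad : radial u) (he : ‖e‖ = 1) {t : ℝ} (ht : t ∈ Ioo (0 : ℝ) 1) :
    t ^ (N - 1) * |deriv (profile u e) t| ≤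
      (∫ x in ball (0 : E N) 1, |lap u x|) / sphereArea N := by
  have hball := hu.mono ball_subset_closedBall
  calc t ^ (N - 1) * |deriv (profile u e) t|
      = |∫ s in 0..t, s ^ (N - 1) * lap u (s • e)| := by
        rw [← pow_mul_deriv_profile_eq_integral hball hrad he ht, abs_mul,
          abs_of_nonneg (pow_nonneg ht.1.le _)]
    _ ≤ ∫ s in 0..t, |s ^ (N - 1) * lap u (s • e)| :=
        intervalIntegral.abs_integral_le_integral_abs ht.1.le
    _ = ∫ s in Ioo 0 t, s ^ (N - 1) * |lap u (s • e)| := by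
        rw [intervalIntegral.integral_of_le ht.1.le, integral_Ioc_eq_integral_Ioo]
        refine setIntegral_congr_fun measurableSet_Ioo fun s hs => ?_
        simp only [abs_mul, abs_of_nonneg (pow_nonneg hs.1.le _)]
    _ ≤ ∫ s in Ioo (0 : ℝ) 1, s ^ (N - 1) * |lap u (s • e)| := by
        refine setIntegral_mono_set (integrableOn_pow_mul_abs_lap hu hrad he) ?_
          (Ioo_subset_Ioo_right ht.2.le).eventuallyLE
        filter_upwards [ae_restrict_mem measurableSet_Ioo] with s hs
        exact mul_nonneg (pow_nonneg hs.1.le _) (abs_nonneg _)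
    _ = (∫ x in ball (0 : E N) 1, |lap u x|) / sphereArea N := by
        rw [setIntegral_ball_abs_lap_of_radial hball hrad he,
          mul_div_cancel_left₀ _ sphereArea_pos.ne']

end RadialFunctions

section RadialLowerBound

variable {N : ℕ} {u : E N → ℝ}

lemma pow_mul_abs_le_of_radial [NeZero N] (hu : memD u) (hrad : radial u) {x : E N}
    (hx : x ∈ ball 0 1) (hx0 : x ≠ 0) :
    ‖x‖ ^ (N - 1) * |u x| ≤
      (∫ y in ball (0 : E N) 1, |lap u y|) / sphereArea N * (1 - ‖x‖) := by
  obtain ⟨e, he⟩ : ∃ e : E N, ‖e‖ = 1 := ⟨EuclideanSpace.single 0 1, by simp⟩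
  have hxn : 0 < ‖x‖ := norm_pos_iff.2 hx0
  have hx1 : ‖x‖ < 1 := mem_ball_zero_iff.1 hx
  have hball := hu.1.mono ball_subset_closedBall
  have hcont : ContinuousOn (profile u e) (Icc ‖x‖ 1) := by
    refine hu.1.continuousOn.comp (by fun_prop) fun t ht => ?_
    simpa [norm_smul_unit_of_nonneg he (hxn.le.trans ht.1)] using ht.2
  obtain ⟨t, ⟨hxt, ht1⟩, hslope⟩ := exists_hasDerivAt_eq_slope (profile u e)
    (deriv (profile u e)) hx1 hcont
    fun t ht => hasDerivAt_profile hball he ⟨by linarith [ht.1], ht.2⟩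
  have hone : profile u e 1 = 0 := hu.2.1 _ (by simp [he])
  have habs : |u x| = |deriv (profile u e) t| * (1 - ‖x‖) := by
    rw [hslope, hone, profile_norm hrad he, zero_sub, abs_div, abs_neg,
      abs_of_pos (sub_pos.2 hx1), div_mul_cancel₀ _ (sub_pos.2 hx1).ne']
  have hpow : ‖x‖ ^ (N - 1) ≤ t ^ (N - 1) := pow_le_pow_left₀ hxn.le hxt.le _
  rw [habs, ← mul_assoc]
  refine mul_le_mul_of_nonneg_right ?_ (sub_pos.2 hx1).le
  exact (mul_le_mul_of_nonneg_right hpow (abs_nonneg _)).trans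
    (pow_mul_abs_deriv_profile_le hu.1 hrad he ⟨hxn.trans hxt, ht1⟩)

lemma integral_abs_lap_le [NeZero N] {β r s : ℝ} (hrs : r.HolderConjugate s) (hβ : -(N : ℝ) < β)
    (hβr : -(N : ℝ) < -β * (r - 1)) (hu : ContDiffOn ℝ 2 u (closedBall 0 1)) :
    ∫ x in ball (0 : E N) 1, |lap u x| ≤
      (∫ x in ball (0 : E N) 1, ‖x‖ ^ (-β * (r - 1)) * |lap u x| ^ r) ^ (1 / r) *
        (sphereArea N / (N + β)) ^ (1 / s) := by
  have hexp : -β * (r - 1) * -(s / r) = β := by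
    have := hrs.ne_zero
    rw [show -β * (r - 1) * -(s / r) = β * ((r - 1) * s / r) by ring, hrs.sub_one_mul_conj,
      div_self this, mul_one]
  have hdual : ∀ x : E N, (‖x‖ ^ (-β * (r - 1))) ^ (-(s / r)) = ‖x‖ ^ β := fun x => by
    rw [← Real.rpow_mul (norm_nonneg x), hexp]
  have hpos : ∀ᵐ x : E N ∂volume.restrict (ball 0 1), 0 < ‖x‖ ^ (-β * (r - 1)) := by
    filter_upwards [ae_restrict_of_ae (Measure.ae_ne volume (0 : E N))] with x hx
    exact Real.rpow_pos_of_pos (norm_pos_iff.2 hx) _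
  have hlap : ContinuousOn (lap u) (ball 0 1) :=
    continuousOn_lap isOpen_ball (hu.mono ball_subset_closedBall)
  rw [← integral_norm_rpow_unitBall hβ, ← funext hdual]
  refine integral_le_weighted_Lp_mul hrs hpos (ae_of_all _ fun _ => abs_nonneg _)
    (integrableOn_norm_rpow_ball hβr 1).aestronglyMeasurable
    (hlap.abs.aestronglyMeasurable measurableSet_ball)
    (integrableOn_norm_rpow_mul_abs_lap_rpow hu hβr hrs.nonneg) ?_
  simp_rw [hdual]
  exact integrableOn_norm_rpow_ball hβ 1

lemma integral_norm_rpow_mul_abs_rpow_pos [NeZero N] (hu : memD u) {α t : ℝ} (hα : 0 ≤ α)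
    (ht : 0 ≤ t) : 0 < ∫ x in ball (0 : E N) 1, ‖x‖ ^ α * |u x| ^ t := by
  obtain ⟨hdiff, hbdry, x₀, hx₀, hux₀⟩ := hu
  have hcont : ContinuousOn (fun x : E N => ‖x‖ ^ α * |u x| ^ t) (closedBall 0 1) :=
    (continuous_norm.continuousOn.rpow_const fun _ _ => Or.inr hα).mul
      (hdiff.continuousOn.abs.rpow_const fun _ _ => Or.inr ht)
  rw [setIntegral_pos_iff_support_of_nonneg_ae (ae_of_all _ fun x => by positivity)
    ((hcont.integrableOn_compact (isCompact_closedBall _ _)).mono_set ball_subset_closedBall)]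
  have hx₀ball : x₀ ∈ ball (0 : E N) 1 := mem_ball_zero_iff.2 <|
    (mem_closedBall_zero_iff.1 hx₀).lt_of_ne fun h => hux₀ (hbdry _ h)
  have hopen : IsOpen (ball (0 : E N) 1 ∩ u ⁻¹' {0}ᶜ) :=
    (hdiff.continuousOn.mono ball_subset_closedBall).isOpen_inter_preimage isOpen_ball
      isOpen_compl_singleton
  calc 0 < volume (ball (0 : E N) 1 ∩ u ⁻¹' {0}ᶜ) := hopen.measure_pos _ ⟨x₀, hx₀ball, hux₀⟩
    _ = volume ((ball (0 : E N) 1 ∩ u ⁻¹' {0}ᶜ) \ {0}) :=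
        (measure_sdiff_null (measure_singleton _)).symm
    _ ≤ _ := by
        refine measure_mono fun x ⟨⟨hx, hux⟩, hx0⟩ => ⟨?_, hx⟩
        exact (mul_pos (Real.rpow_pos_of_pos (norm_pos_iff.2 hx0) α)
          (Real.rpow_pos_of_pos (abs_pos.2 hux) t)).ne'

lemma integral_norm_rpow_mul_abs_rpow_le [NeZero N] {K α t : ℝ} (hK : 0 ≤ K) (ht : 0 ≤ t)
    (hα : ((N : ℝ) - 1) * (t - 1) < α)
    (hbound : ∀ x ∈ ball (0 : E N) 1, x ≠ 0 → ‖x‖ ^ (N - 1) * |u x| ≤ K * (1 - ‖x‖)) :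
    ∫ x in ball (0 : E N) 1, ‖x‖ ^ α * |u x| ^ t ≤
      K ^ t * (sphereArea N *
        (Real.Gamma (t + 1) / (α - ((N : ℝ) - 1) * (t - 1)) ^ (t + 1))) := by
  set γ : ℝ := α - ((N : ℝ) - 1) * t with hγ
  have hpointwise : ∀ x ∈ ball (0 : E N) 1, x ≠ 0 →
      ‖x‖ ^ α * |u x| ^ t ≤ K ^ t * (‖x‖ ^ γ * (1 - ‖x‖) ^ t) := fun x hx hx0 => by
    have hxn : 0 < ‖x‖ := norm_pos_iff.2 hx0
    have hx1 : 0 ≤ 1 - ‖x‖ := (sub_pos.2 (mem_ball_zero_iff.1 hx)).le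
    calc ‖x‖ ^ α * |u x| ^ t = ‖x‖ ^ γ * (‖x‖ ^ (N - 1) * |u x|) ^ t := by
          rw [Real.mul_rpow (by positivity) (abs_nonneg _), ← mul_assoc, ← Real.rpow_natCast,
            Nat.cast_pred (NeZero.pos N), ← Real.rpow_mul hxn.le, ← Real.rpow_add hxn, hγ,
            sub_add_cancel]
      _ ≤ ‖x‖ ^ γ * (K * (1 - ‖x‖)) ^ t :=
          mul_le_mul_of_nonneg_left (Real.rpow_le_rpow (by positivity) (hbound x hx hx0) ht)
            (by positivity)
      _ = K ^ t * (‖x‖ ^ γ * (1 - ‖x‖) ^ t) := by rw [Real.mul_rpow hK hx1]; ring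
  have hint := integrableOn_norm_rpow_mul_one_sub_norm_rpow (N := N) (γ := γ) (by linarith) ht
  calc ∫ x in ball (0 : E N) 1, ‖x‖ ^ α * |u x| ^ t
      ≤ ∫ x in ball (0 : E N) 1, K ^ t * (‖x‖ ^ γ * (1 - ‖x‖) ^ t) := by
        refine integral_mono_of_nonneg (ae_of_all _ fun x => by positivity) (hint.const_mul _) ?_
        filter_upwards [ae_restrict_mem measurableSet_ball,
          ae_restrict_of_ae (Measure.ae_ne volume (0 : E N))] with x hx hx0
          using hpointwise x hx hx0
    _ = K ^ t * (sphereArea N * ∫ s in Ioo (0 : ℝ) 1,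
          s ^ (α - ((N : ℝ) - 1) * (t - 1)) * (1 - s) ^ t) := by
        rw [integral_const_mul, setIntegral_ball_fun_norm fun s => s ^ γ * (1 - s) ^ t]
        congr 2
        refine setIntegral_congr_fun measurableSet_Ioo fun s hs => ?_
        simp only [← mul_assoc, pow_pred_mul_rpow hs.1]
        rw [hγ]
        ring_nf
    _ ≤ _ := by
        gcongr
        · exact sphereArea_pos.le
        · exact integral_rpow_mul_one_sub_rpow_le (sub_pos.2 hα) ht

lemma mul_rpow_le_div_rpow {A b D I M r t α : ℝ} (hA : 0 < A) (hD : 0 < D) (hI : 0 ≤ I)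
    (hM : 0 < M) (hr : 0 < r) (ht : 0 < t) (hα : 0 < α)
    (hDle : D ≤ (A * I ^ (1 / r)) ^ t * (M / α ^ b)) :
    (A ^ r * M ^ (r / t))⁻¹ * α ^ (b * (r / t)) ≤ I / D ^ (r / t) := by
  have hDr : D ^ (r / t) ≤ A ^ r * I * (M ^ (r / t) / α ^ (b * (r / t))) := by
    refine (Real.rpow_le_rpow hD.le hDle (by positivity)).trans_eq ?_
    rw [Real.mul_rpow (by positivity) (by positivity), Real.div_rpow hM.le (by positivity),
      ← Real.rpow_mul (by positivity), ← Real.rpow_mul hα.le, mul_div_cancel₀ r ht.ne',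
      Real.mul_rpow hA.le (by positivity), ← Real.rpow_mul hI, one_div_mul_cancel hr.ne',
      Real.rpow_one]
  rw [le_div_iff₀ (by positivity)]
  calc (A ^ r * M ^ (r / t))⁻¹ * α ^ (b * (r / t)) * D ^ (r / t)
      ≤ (A ^ r * M ^ (r / t))⁻¹ * α ^ (b * (r / t)) *
          (A ^ r * I * (M ^ (r / t) / α ^ (b * (r / t)))) := by gcongr
    _ = I := by field

lemma pow_mul_abs_le_weighted_integral_lap [NeZero N] {β r s : ℝ} (hrs : r.HolderConjugate s)
    (hβ : -(N : ℝ) < β) (hβr : -(N : ℝ) < -β * (r - 1)) (hu : memD u) (hrad : radial u) {x : E N}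
    (hx : x ∈ ball 0 1) (hx0 : x ≠ 0) :
    ‖x‖ ^ (N - 1) * |u x| ≤ (sphereArea N / (N + β)) ^ (1 / s) / sphereArea N *
      (∫ y in ball (0 : E N) 1, ‖y‖ ^ (-β * (r - 1)) * |lap u y| ^ r) ^ (1 / r) * (1 - ‖x‖) := by
  refine (pow_mul_abs_le_of_radial hu hrad hx hx0).trans
    (mul_le_mul_of_nonneg_right ?_ (sub_pos.2 (mem_ball_zero_iff.1 hx)).le)
  rw [div_mul_eq_mul_div, mul_comm]
  exact div_le_div_of_nonneg_right (integral_abs_lap_le hrs hβ hβr hu.1) sphereArea_pos.le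

lemma exists_mul_rpow_le_ray2_of_radial [NeZero N] {β p r : ℝ} (hr : 1 < r) (hβ : -(N : ℝ) < β)
    (hβr : -(N : ℝ) < -β * (r - 1)) (hp : 0 < p) :
    ∃ c > 0, ∀ α > 0, 2 * (((N : ℝ) - 1) * p) ≤ α → ∀ u : E N → ℝ, memD u → radial u →
      c * α ^ ((p + 2) * (r / (p + 1))) ≤ ray2 α β p r u := by
  have hω : 0 < sphereArea N := sphereArea_pos
  have hNβ : 0 < (N : ℝ) + β := by linarith
  set A : ℝ := (sphereArea N / (N + β)) ^ (1 / r.conjExponent) / sphereArea N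
  set M : ℝ := sphereArea N * (Real.Gamma (p + 2) * 2 ^ (p + 2))
  have hA : 0 < A := by positivity
  have hM : 0 < M := by positivity
  refine ⟨(A ^ r * M ^ (r / (p + 1)))⁻¹, by positivity, fun α hα hαp u hu hrad => ?_⟩
  set I := ∫ x in ball (0 : E N) 1, ‖x‖ ^ (-β * (r - 1)) * |lap u x| ^ r
  have hI : 0 ≤ I := integral_nonneg fun x => by positivity
  refine mul_rpow_le_div_rpow hA
    (integral_norm_rpow_mul_abs_rpow_pos hu hα.le (by linarith)) hI hM (by linarith)
    (by linarith) hα ?_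
  have hhalf : α / 2 ≤ α - ((N : ℝ) - 1) * (p + 1 - 1) := by linarith
  calc ∫ x in ball (0 : E N) 1, ‖x‖ ^ α * |u x| ^ (p + 1)
      ≤ (A * I ^ (1 / r)) ^ (p + 1) * (sphereArea N *
          (Real.Gamma (p + 1 + 1) / (α - ((N : ℝ) - 1) * (p + 1 - 1)) ^ (p + 1 + 1))) :=
        integral_norm_rpow_mul_abs_rpow_le (by positivity) (by linarith) (by linarith)
          fun x hx hx0 => pow_mul_abs_le_weighted_integral_lap (.conjExponent hr) hβ hβr hu hrad
            hx hx0
    _ ≤ (A * I ^ (1 / r)) ^ (p + 1) *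
          (sphereArea N * (Real.Gamma (p + 2) / (α / 2) ^ (p + 2))) := by
        rw [add_assoc p 1 1, one_add_one_eq_two]
        gcongr
    _ = (A * I ^ (1 / r)) ^ (p + 1) * (M / α ^ (p + 2)) := by
        rw [Real.div_rpow hα.le two_pos.le, div_div_eq_mul_div, ← mul_div_assoc]

lemma exists_memD_radial (N : ℕ) : ∃ u : E N → ℝ, memD u ∧ radial u :=
  ⟨fun x => 1 - ‖x‖ ^ 2,
    ⟨(contDiff_const.sub (contDiff_norm_sq ℝ)).contDiffOn, fun x hx => by simp [hx], 0, by simp⟩,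
    fun x y hxy => by simp [hxy]⟩

end RadialLowerBound

section ConcentratedFunctions

/-- The copy of `φ` rescaled to size `1 / α` about the point `(1 - 1 / α) e`. When `φ` lives in the
unit ball and `e` is a unit vector, it lives in the ball of radius `1 / α` touching the unit sphere
from inside at `e`. -/
def concentrate {N : ℕ} (φ : E N → ℝ) (e : E N) (α : ℝ) (x : E N) : ℝ :=
  φ (α • (x - (1 - α⁻¹) • e))

variable {N : ℕ} {φ : E N → ℝ} {e : E N} {α : ℝ}

lemma norm_mem_Ioo_of_norm_smul_sub_lt_one (he : ‖e‖ = 1) (hα : 1 ≤ α) {x : E N}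
    (hx : ‖α • (x - (1 - α⁻¹) • e)‖ < 1) : ‖x‖ ∈ Ioo (1 - 2 * α⁻¹) 1 := by
  have hα0 : 0 < α := one_pos.trans_le hα
  have hcenter : ‖(1 - α⁻¹) • e‖ = 1 - α⁻¹ :=
    norm_smul_unit_of_nonneg he (sub_nonneg.2 (inv_le_one_of_one_le₀ hα))
  have hdist : ‖x - (1 - α⁻¹) • e‖ < α⁻¹ := by
    rwa [norm_smul, Real.norm_of_nonneg hα0.le, ← lt_inv_mul_iff₀ hα0, mul_one] at hx
  have hlower := norm_sub_norm_le ((1 - α⁻¹) • e) x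
  have hupper := norm_sub_norm_le x ((1 - α⁻¹) • e)
  rw [norm_sub_rev] at hlower
  constructor <;> linarith

lemma contDiff_concentrate {n : WithTop ℕ∞} (hφ : ContDiff ℝ n φ) :
    ContDiff ℝ n (concentrate φ e α) :=
  hφ.comp ((contDiff_id.sub contDiff_const).const_smul α)

lemma concentrate_eq_zero (hsupp : Function.support φ ⊆ ball 0 1) (he : ‖e‖ = 1) (hα : 1 ≤ α)
    {x : E N} (hx : 1 ≤ ‖x‖) : concentrate φ e α x = 0 := by
  by_contra hne
  have hmem : α • (x - (1 - α⁻¹) • e) ∈ ball (0 : E N) 1 := hsupp hne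
  exact hx.not_gt (norm_mem_Ioo_of_norm_smul_sub_lt_one he hα (mem_ball_zero_iff.1 hmem)).2

lemma memD_concentrate (hφ : ContDiff ℝ 2 φ) (hsupp : Function.support φ ⊆ ball 0 1)
    (hφ0 : φ ≠ 0) (he : ‖e‖ = 1) (hα : 1 ≤ α) : memD (concentrate φ e α) := by
  refine ⟨(contDiff_concentrate hφ).contDiffOn,
    fun x hx => concentrate_eq_zero hsupp he hα hx.ge, ?_⟩
  obtain ⟨y, hy⟩ := Function.ne_iff.1 hφ0
  have hvalue : concentrate φ e α (α⁻¹ • y + (1 - α⁻¹) • e) = φ y := by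
    rw [concentrate, add_sub_cancel_right, smul_inv_smul₀ (one_pos.trans_le hα).ne']
  refine ⟨α⁻¹ • y + (1 - α⁻¹) • e, ?_, hvalue.trans_ne hy⟩
  by_contra hout
  rw [mem_closedBall_zero_iff, not_le] at hout
  exact hy (hvalue ▸ concentrate_eq_zero hsupp he hα hout.le)

lemma lap_concentrate (hφ : ContDiff ℝ 2 φ) (x : E N) :
    lap (concentrate φ e α) x = α ^ 2 * lap φ (α • (x - (1 - α⁻¹) • e)) :=
  lap_comp_smul_sub hφ α _ x

lemma integral_comp_smul_sub (f : E N → ℝ) (hα : 0 < α) (a : E N) :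
    ∫ x, f (α • (x - a)) = α ^ (-(N : ℝ)) * ∫ x, f x := by
  rw [integral_sub_right_eq_self (fun x => f (α • x)) a,
    Measure.integral_comp_smul volume f α, finrank_euclideanSpace_fin, smul_eq_mul,
    abs_of_pos (by positivity), Real.rpow_neg hα.le, Real.rpow_natCast]

lemma integrable_abs_lap_rpow (hφ : ContDiff ℝ 2 φ) (hsupp : HasCompactSupport φ) {r : ℝ}
    (hr : 0 < r) : Integrable fun x => |lap φ x| ^ r := by
  have hcont : Continuous (lap φ) :=
    continuousOn_univ.1 (continuousOn_lap isOpen_univ hφ.contDiffOn)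
  refine (hcont.abs.rpow_const fun _ => Or.inr hr.le).integrable_of_hasCompactSupport ?_
  refine hsupp.mono' fun x hx => support_lap_subset φ fun hlap => hx ?_
  simp only [hlap, abs_zero, Real.zero_rpow hr.ne']

lemma norm_rpow_mul_abs_lap_concentrate_rpow_le (hφ : ContDiff ℝ 2 φ)
    (hsupp : tsupport φ ⊆ ball 0 1) (he : ‖e‖ = 1) (hα : 4 ≤ α) {r : ℝ} (hr : 0 < r) (γ : ℝ)
    (x : E N) : ‖x‖ ^ γ * |lap (concentrate φ e α) x| ^ r ≤
      2 ^ |γ| * α ^ (2 * r) * |lap φ (α • (x - (1 - α⁻¹) • e))| ^ r := by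
  have hα0 : 0 < α := by linarith
  have hlap : |lap (concentrate φ e α) x| ^ r =
      α ^ (2 * r) * |lap φ (α • (x - (1 - α⁻¹) • e))| ^ r := by
    rw [lap_concentrate hφ, abs_mul, abs_of_nonneg (sq_nonneg α),
      Real.mul_rpow (by positivity) (abs_nonneg _), Real.rpow_mul hα0.le, Real.rpow_two]
  rw [hlap, ← mul_assoc]
  rcases eq_or_ne (lap φ (α • (x - (1 - α⁻¹) • e))) 0 with hzero | hne
  · simp [hzero, Real.zero_rpow hr.ne']
  have hmem := mem_ball_zero_iff.1 (hsupp (support_lap_subset φ hne))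
  obtain ⟨hx, hx1⟩ := norm_mem_Ioo_of_norm_smul_sub_lt_one he (by linarith) hmem
  have hinv : α⁻¹ ≤ 4⁻¹ := inv_anti₀ (by norm_num) hα
  gcongr
  exact rpow_le_two_rpow_abs (by linarith) hx1.le γ

lemma integral_norm_rpow_mul_abs_lap_concentrate_rpow_le (hφ : ContDiff ℝ 2 φ)
    (hsupp : tsupport φ ⊆ ball 0 1) (he : ‖e‖ = 1) (hα : 4 ≤ α) {r : ℝ} (hr : 0 < r) (γ : ℝ) :
    ∫ x in ball (0 : E N) 1, ‖x‖ ^ γ * |lap (concentrate φ e α) x| ^ r ≤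
      2 ^ |γ| * (∫ x, |lap φ x| ^ r) * α ^ (2 * r - N) := by
  have hα0 : 0 < α := by linarith
  have hcompact : HasCompactSupport φ :=
    .of_support_subset_isCompact (isCompact_closedBall 0 1)
      ((subset_tsupport φ).trans (hsupp.trans ball_subset_closedBall))
  have hint : Integrable fun x : E N =>
      2 ^ |γ| * α ^ (2 * r) * |lap φ (α • (x - (1 - α⁻¹) • e))| ^ r :=
    (((integrable_abs_lap_rpow hφ hcompact hr).comp_smul hα0.ne').comp_sub_right _).const_mul _
  calc ∫ x in ball (0 : E N) 1, ‖x‖ ^ γ * |lap (concentrate φ e α) x| ^ r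
      ≤ ∫ x in ball (0 : E N) 1,
          2 ^ |γ| * α ^ (2 * r) * |lap φ (α • (x - (1 - α⁻¹) • e))| ^ r :=
        integral_mono_of_nonneg (ae_of_all _ fun x => by positivity) hint.integrableOn
          (ae_of_all _ (norm_rpow_mul_abs_lap_concentrate_rpow_le hφ hsupp he hα hr γ))
    _ ≤ ∫ x, 2 ^ |γ| * α ^ (2 * r) * |lap φ (α • (x - (1 - α⁻¹) • e))| ^ r :=
        setIntegral_le_integral hint (ae_of_all _ fun x => by positivity)
    _ = 2 ^ |γ| * (∫ x, |lap φ x| ^ r) * α ^ (2 * r - N) := by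
        rw [integral_const_mul, integral_comp_smul_sub (fun y => |lap φ y| ^ r) hα0,
          sub_eq_add_neg, Real.rpow_add hα0]
        ring

lemma exp_neg_four_mul_abs_concentrate_rpow_le (hsupp : Function.support φ ⊆ ball 0 1)
    (he : ‖e‖ = 1) (hα : 4 ≤ α) {t : ℝ} (ht : 0 < t) (x : E N) :
    Real.exp (-4) * |concentrate φ e α x| ^ t ≤ ‖x‖ ^ α * |concentrate φ e α x| ^ t := by
  by_cases hne : concentrate φ e α x = 0
  · simp [hne, Real.zero_rpow ht.ne']
  have hα0 : 0 < α := by linarith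
  obtain ⟨hx, hx1⟩ := norm_mem_Ioo_of_norm_smul_sub_lt_one he (by linarith)
    (mem_ball_zero_iff.1 (hsupp hne))
  have hinv : α⁻¹ ≤ 4⁻¹ := inv_anti₀ (by norm_num) hα
  have hdist : α * (1 - ‖x‖) ≤ 2 := calc
    α * (1 - ‖x‖) ≤ α * (2 * α⁻¹) := by gcongr; linarith
    _ = 2 := by field
  refine mul_le_mul_of_nonneg_right ?_ (by positivity)
  calc Real.exp (-4) ≤ Real.exp (-(2 * (α * (1 - ‖x‖)))) := Real.exp_le_exp.2 (by linarith)
    _ ≤ ‖x‖ ^ α := exp_neg_two_mul_le_rpow (by linarith) hx1.le hα0.le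

lemma le_integral_norm_rpow_mul_abs_concentrate_rpow (hφ : Continuous φ)
    (hsupp : Function.support φ ⊆ ball 0 1) (he : ‖e‖ = 1) (hα : 4 ≤ α) {t : ℝ} (ht : 0 < t) :
    Real.exp (-4) * (∫ x, |φ x| ^ t) * α ^ (-(N : ℝ)) ≤
      ∫ x in ball (0 : E N) 1, ‖x‖ ^ α * |concentrate φ e α x| ^ t := by
  have hα0 : 0 < α := by linarith
  have hcont : Continuous (concentrate φ e α) := contDiff_zero.1
    (contDiff_concentrate (contDiff_zero.2 hφ))
  have hzero : ∀ x ∉ ball (0 : E N) 1, |concentrate φ e α x| ^ t = 0 := fun x hx => by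
    rw [concentrate_eq_zero hsupp he (by linarith) (by simpa using hx), abs_zero,
      Real.zero_rpow ht.ne']
  have hcont_rpow : Continuous fun x => |concentrate φ e α x| ^ t :=
    hcont.abs.rpow_const fun _ => Or.inr ht.le
  have hcont_weighted : Continuous fun x => ‖x‖ ^ α * |concentrate φ e α x| ^ t :=
    (continuous_norm.rpow_const fun _ => Or.inr hα0.le).mul hcont_rpow
  have hintegrable : ∀ {f : E N → ℝ}, Continuous f → IntegrableOn f (ball 0 1) := fun hf =>
    (hf.continuousOn.integrableOn_compact (isCompact_closedBall _ _)).mono_set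
      ball_subset_closedBall
  calc Real.exp (-4) * (∫ x, |φ x| ^ t) * α ^ (-(N : ℝ))
      = Real.exp (-4) * ∫ x, |concentrate φ e α x| ^ t := by
        rw [mul_assoc, mul_comm (∫ x, |φ x| ^ t)]
        exact congrArg _ (integral_comp_smul_sub (fun y => |φ y| ^ t) hα0 _).symm
    _ = ∫ x in ball (0 : E N) 1, Real.exp (-4) * |concentrate φ e α x| ^ t := by
        rw [integral_const_mul, setIntegral_eq_integral_of_forall_compl_eq_zero hzero]
    _ ≤ _ := setIntegral_mono (hintegrable (hcont_rpow.const_mul _)) (hintegrable hcont_weighted)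
        (exp_neg_four_mul_abs_concentrate_rpow_le hsupp he hα ht)

lemma ray2_concentrate_le (hφ : ContDiff ℝ 2 φ) (hsupp : tsupport φ ⊆ ball 0 1) (hφ0 : φ ≠ 0)
    (he : ‖e‖ = 1) (hα : 4 ≤ α) {β p r : ℝ} (hp : 0 < p + 1) (hr : 0 < r) :
    ray2 α β p r (concentrate φ e α) ≤
      2 ^ |-β * (r - 1)| * (∫ x, |lap φ x| ^ r) /
          (Real.exp (-4) * ∫ x, |φ x| ^ (p + 1)) ^ (r / (p + 1)) *
        α ^ (2 * r - N + N * (r / (p + 1))) := by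
  have hα0 : 0 < α := by linarith
  have hsupport : Function.support φ ⊆ ball 0 1 := (subset_tsupport φ).trans hsupp
  obtain ⟨y, hy⟩ := Function.ne_iff.1 hφ0
  have hmass : 0 < ∫ x, |φ x| ^ (p + 1) := by
    refine (hφ.continuous.abs.rpow_const fun _ => Or.inr hp.le)
      |>.integral_pos_of_hasCompactSupport_nonneg_nonzero (x := y) ?_ (fun x => by positivity)
        (Real.rpow_pos_of_pos (abs_pos.2 hy) _).ne'
    refine .intro (isCompact_closedBall 0 1) fun x hx => ?_
    have hx0 : φ x = 0 := by
      by_contra hne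
      exact hx (ball_subset_closedBall (hsupport hne))
    rw [hx0, abs_zero, Real.zero_rpow hp.ne']
  have : 0 ≤ ∫ x, |lap φ x| ^ r := integral_nonneg fun x => by positivity
  calc ray2 α β p r (concentrate φ e α)
      ≤ 2 ^ |-β * (r - 1)| * (∫ x, |lap φ x| ^ r) * α ^ (2 * r - N) /
          (Real.exp (-4) * (∫ x, |φ x| ^ (p + 1)) * α ^ (-(N : ℝ))) ^ (r / (p + 1)) :=
        div_le_div₀ (by positivity)
          (integral_norm_rpow_mul_abs_lap_concentrate_rpow_le hφ hsupp he hα hr _)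
          (by positivity)
          (Real.rpow_le_rpow (by positivity)
            (le_integral_norm_rpow_mul_abs_concentrate_rpow hφ.continuous hsupport he hα hp)
            (by positivity))
    _ = _ := by
        rw [Real.mul_rpow (by positivity) (by positivity), ← Real.rpow_mul hα0.le,
          Real.rpow_add hα0, neg_mul (N : ℝ), Real.rpow_neg hα0.le]
        field

end ConcentratedFunctions

section GroundStateLevels

variable {N : ℕ} {α β p r : ℝ} {u : E N → ℝ}

lemma ray2_nonneg (α β p r : ℝ) (u : E N → ℝ) : 0 ≤ ray2 α β p r u :=
  div_nonneg (integral_nonneg fun x => by positivity)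
    (Real.rpow_nonneg (integral_nonneg fun x => by positivity) _)

lemma S2_le_ray2 (hu : memD u) : S2 N α β p r ≤ ray2 α β p r u :=
  csInf_le ⟨0, by rintro _ ⟨v, -, rfl⟩; exact ray2_nonneg α β p r v⟩ ⟨u, hu, rfl⟩

lemma S2rad_le_ray2 (hu : memD u) (hrad : radial u) : S2rad N α β p r ≤ ray2 α β p r u :=
  csInf_le ⟨0, by rintro _ ⟨v, -, -, rfl⟩; exact ray2_nonneg α β p r v⟩ ⟨u, hu, hrad, rfl⟩

theorem exists_S2_le_mul_rpow [NeZero N] (β : ℝ) (hp : 0 < p + 1) (hr : 0 < r) :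
    ∃ C : ℝ, ∀ᶠ α in atTop, S2 N α β p r ≤ C * α ^ (2 * r - N + N * (r / (p + 1))) := by
  obtain ⟨e, he⟩ : ∃ e : E N, ‖e‖ = 1 := ⟨EuclideanSpace.single 0 1, by simp⟩
  obtain ⟨φ, hsupp, -, hφ, -, hφ1⟩ :=
    exists_contDiff_tsupport_subset (n := 2) (ball_mem_nhds (0 : E N) one_pos)
  have hφ0 : φ ≠ 0 := Function.ne_iff.2 ⟨0, hφ1.trans_ne one_ne_zero⟩
  refine ⟨2 ^ |-β * (r - 1)| * (∫ x, |lap φ x| ^ r) /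
    (Real.exp (-4) * ∫ x, |φ x| ^ (p + 1)) ^ (r / (p + 1)),
    (eventually_ge_atTop 4).mono fun α hα => ?_⟩
  exact (S2_le_ray2 (memD_concentrate hφ ((subset_tsupport φ).trans hsupp) hφ0 he
    (by linarith))).trans (ray2_concentrate_le hφ hsupp hφ0 he hα hp hr)

theorem exists_mul_rpow_le_S2rad [NeZero N] (hr : 1 < r) (hβ : -(N : ℝ) < β)
    (hβr : -(N : ℝ) < -β * (r - 1)) (hp : 0 < p) :
    ∃ c > 0, ∀ᶠ α in atTop, c * α ^ ((p + 2) * (r / (p + 1))) ≤ S2rad N α β p r := by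
  obtain ⟨c, hc, hle⟩ := exists_mul_rpow_le_ray2_of_radial hr hβ hβr hp
  obtain ⟨u₀, hu₀, hrad₀⟩ := exists_memD_radial N
  refine ⟨c, hc, ?_⟩
  filter_upwards [eventually_gt_atTop 0, eventually_ge_atTop (2 * (((N : ℝ) - 1) * p))]
    with α hα hαp
  refine le_csInf ⟨_, u₀, hu₀, hrad₀, rfl⟩ ?_
  rintro _ ⟨u, hu, hrad, rfl⟩
  exact hle α hα hαp u hu hrad

lemma ground_exponent_lt_radial_exponent {q : ℝ} (hp : 0 < p + 1) (hq : 0 < q)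
    (hpq : (N : ℝ) < p * (((N : ℝ) - 1) * q - 1)) (hr : r = (q + 1) / q) :
    2 * r - N + N * (r / (p + 1)) < (p + 2) * (r / (p + 1)) := by
  have hgap : (p + 2) * (r / (p + 1)) - (2 * r - N + N * (r / (p + 1))) =
      (p * (((N : ℝ) - 1) * q - 1) - N) / (q * (p + 1)) := by
    rw [hr]
    field
  have hpos : 0 < (p * (((N : ℝ) - 1) * q - 1) - N) / (q * (p + 1)) :=
    div_pos (sub_pos.2 hpq) (by positivity)
  exact sub_pos.1 (hgap ▸ hpos)

end GroundStateLevels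

theorem stmt18_general {N : ℕ} (β p q r : ℝ) (hβ1 : -(N : ℝ) < β) (hβ2 : β < N * q)
    (hp : 0 < p) (hq : 0 < q) (hpq : (N : ℝ) < p * (((N : ℝ) - 1) * q - 1))
    (hr : r = (q + 1) / q) :
    ∃ α₀ : ℝ, 0 < α₀ ∧ ∀ α : ℝ, α₀ ≤ α →
      S2 N α β p r < S2rad N α β p r ∧
      ∀ u : E N → ℝ, memD u → radial u → ray2 α β p r u ≠ S2 N α β p r := by
  have : NeZero N := ⟨by rintro rfl; norm_num at hpq; nlinarith⟩
  have hp1 : 0 < p + 1 := by linarith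
  have hr_sub : r - 1 = q⁻¹ := by rw [hr]; field
  have hr1 : 1 < r := by linarith [inv_pos.2 hq]
  have hweight : -(N : ℝ) < -β * (r - 1) := by
    rw [hr_sub, neg_mul, neg_lt_neg_iff, ← div_eq_mul_inv, div_lt_iff₀ hq]
    exact hβ2
  obtain ⟨C, hC⟩ := exists_S2_le_mul_rpow (N := N) β hp1 (one_pos.trans hr1)
  obtain ⟨c, hc, hcrad⟩ := exists_mul_rpow_le_S2rad hr1 hβ1 hweight hp
  obtain ⟨α₀, hα₀⟩ := eventually_atTop.1 <| (hC.and hcrad).and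
    (eventually_mul_rpow_lt_mul_rpow (ground_exponent_lt_radial_exponent hp1 hq hpq hr) hc C)
  refine ⟨max α₀ 1, by positivity, fun α hα => ?_⟩
  obtain ⟨⟨hupper, hlower⟩, hgap⟩ := hα₀ α (le_of_max_le_left hα)
  have hlt : S2 N α β p r < S2rad N α β p r := (hupper.trans_lt hgap).trans_le hlower
  exact ⟨hlt, fun u hu hrad => ne_of_gt (hlt.trans_le (S2rad_le_ray2 hu hrad))⟩

/-- Calanchi–Ruf symmetry breaking (mixed Hénon–Hardy case, part (b)): for -N < β < 0
and α large the radial ground-state level exceeds the ground-state level, so no radial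
member of 𝒟 attains the infimum. -/
theorem stmt18 {N : ℕ} (hN : 3 ≤ N) (β p q r : ℝ)
    (hβ1 : -(N : ℝ) < β) (hβ2 : β < 0) (hp : 1 < p) (hq : 1 < q)
    (hhyp : (N : ℝ) / (p + 1) + ((N : ℝ) - |β|) / (q + 1) > (N : ℝ) - 2)
    (hpq : p > (N : ℝ) / (((N : ℝ) - 1) * q - 1))
    (hr : r = (q + 1) / q) :
    ∃ α₀ : ℝ, 0 < α₀ ∧ ∀ α : ℝ, α₀ ≤ α →
      S2 N α β p r < S2rad N α β p r ∧
      ∀ u : E N → ℝ, memD u → radial u → ray2 α β p r u ≠ S2 N α β p r := by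
  have hN' : (3 : ℝ) ≤ N := by exact_mod_cast hN
  have hden : 0 < ((N : ℝ) - 1) * q - 1 := by nlinarith
  exact stmt18_general β p q r hβ1 (hβ2.trans (by positivity)) (one_pos.trans hp)
    (one_pos.trans hq) ((div_lt_iff₀ hden).1 hpq) hr
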